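/- Let L₁, …, L_f be number fields contained in a fixed algebraic closure of ℚ, and let L₁⋯L_f denote their compositum. Then d_{L₁⋯L_f} ≤ (d_{L₁} · d_{L₂} ⋯ d_{L_f})^{[L₁:ℚ]·[L₂:ℚ]⋯[L_f:ℚ]}. -/

import Mathlib

/-!
Let `L = F₁F₂` be a compositum of number fields, let `(bᵢ)` be a `ℚ`-basis of `F₂` and `(bᵢ*)`
its trace dual. An embedding of `L` over `F₁` is determined by its restriction to `F₂`, so the
orthogonality relations `∑ᵢ σ(bᵢ) τ(bᵢ*) = δ_{στ}` between embeddings of `F₂` give the expansion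
`x = ∑ᵢ Tr_{L/F₁}(x bᵢ) bᵢ*` for all `x` in `L`. When `(bᵢ)` is an integral basis and `x` lies in
the inverse different of `L/F₁`, the traces are integral, so any `y` in the different of `F₂/ℚ`
satisfies `y x ∈ 𝓞_L`: the different of `L/F₁` divides that of `F₂/ℚ`. Taking norms,
`d_L ∣ d_{F₁}^[L:F₁] d_{F₂}^[L:F₂]`, and by multiplicativity of relative degrees the compositum
`M` of any finite family satisfies `d_M ∣ ∏ d_{Lᵢ}^[M:Lᵢ]`, where `[M:Lᵢ] ≤ [M:ℚ] ≤ ∏ [Lⱼ:ℚ]`.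
-/

open IntermediateField Module NumberField Submodule nonZeroDivisors
open Algebra hiding botEquiv discr discr_eq_discr_of_algEquiv

section TraceExpansion

variable {K L E : Type*} [Field K] [Field L] [Algebra K L] [Field E] [Algebra K E]

theorem sum_algHom_basis_mul_algHom_traceDual {ι : Type*} [FiniteDimensional K L]
    [Algebra.IsSeparable K L] [IsAlgClosed E] [Fintype ι] [DecidableEq ι] (b : Basis ι K L)
    (σ τ : L →ₐ[K] E) [Decidable (σ = τ)] :
    ∑ i, σ (b i) * τ (b.traceDual i) = if σ = τ then 1 else 0 := by
  classical
  let P := embeddingsMatrix K E b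
  let Q := embeddingsMatrix K E b.traceDual
  have card_eq : Fintype.card ι = Fintype.card (L →ₐ[K] E) := by
    rw [AlgHom.card K L E, finrank_eq_card_basis b]
  have trace_dual : P * Q.transpose = 1 := by
    ext i j
    have := congrArg (algebraMap K E) (b.trace_mul_traceDual i j)
    rw [trace_eq_sum_embeddings E] at this
    simpa only [P, Q, Matrix.mul_apply, Matrix.transpose_apply, embeddingsMatrix_apply, map_mul,
      MonoidWithZeroHom.map_ite_one_zero, Matrix.one_apply] using this
  have := congrFun₂ ((Matrix.mul_eq_one_comm_of_card_eq _ _ _ card_eq).mp trace_dual) τ σ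
  simpa [P, Q, Matrix.mul_apply, Matrix.one_apply, mul_comm, eq_comm] using this

variable {F₁ F₂ : IntermediateField K L}

theorem algHom_comp_val_injective_of_sup_eq_top [Algebra F₁ E] [IsScalarTower K F₁ E]
    (h : F₁ ⊔ F₂ = ⊤) :
    Function.Injective fun σ : L →ₐ[F₁] E ↦ (σ.restrictScalars K).comp F₂.val := by
  intro σ τ hστ
  have eq_on_right : ∀ x : F₂, σ x = τ x := DFunLike.congr_fun hστ
  have agree : F₁.toSubfield ⊔ F₂.toSubfield ≤ (σ : L →+* E).eqLocusField τ :=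
    sup_le (fun x hx ↦ (σ.commutes ⟨x, hx⟩).trans (τ.commutes ⟨x, hx⟩).symm)
      fun x hx ↦ eq_on_right ⟨x, hx⟩
  rw [← sup_toSubfield, h] at agree
  exact AlgHom.ext fun x ↦ agree (x := x) trivial

theorem sum_algHom_basis_mul_algHom_traceDual_of_sup_eq_top {ι : Type*} [FiniteDimensional K F₂]
    [Algebra.IsSeparable K F₂] [IsAlgClosed E] [Algebra F₁ E] [IsScalarTower K F₁ E] [Fintype ι]
    [DecidableEq ι] (h : F₁ ⊔ F₂ = ⊤) (b : Basis ι K F₂) (σ τ : L →ₐ[F₁] E) [Decidable (σ = τ)] :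
    ∑ i, σ (b i) * τ (b.traceDual i) = if σ = τ then 1 else 0 := by
  classical
  refine (sum_algHom_basis_mul_algHom_traceDual b ((σ.restrictScalars K).comp F₂.val)
    ((τ.restrictScalars K).comp F₂.val)).trans ?_
  exact if_congr (algHom_comp_val_injective_of_sup_eq_top h).eq_iff rfl rfl

theorem sum_trace_mul_smul_traceDual_of_sup_eq_top {ι : Type*} [FiniteDimensional K F₂]
    [Algebra.IsSeparable K F₂] [FiniteDimensional F₁ L] [Algebra.IsSeparable F₁ L] [Fintype ι]
    [DecidableEq ι] (h : F₁ ⊔ F₂ = ⊤) (b : Basis ι K F₂) (x : L) :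
    ∑ i, trace F₁ L (x * b i) • (b.traceDual i : L) = x := by
  classical
  let σ₀ : L →ₐ[F₁] AlgebraicClosure L := IsScalarTower.toAlgHom F₁ L (AlgebraicClosure L)
  apply σ₀.injective
  calc σ₀ (∑ i, trace F₁ L (x * b i) • (b.traceDual i : L))
    _ = ∑ i, (∑ σ : L →ₐ[F₁] AlgebraicClosure L, σ (x * b i)) * σ₀ (b.traceDual i) := by
      simp only [map_sum, map_mul, Algebra.smul_def, AlgHom.commutes,
        trace_eq_sum_embeddings (AlgebraicClosure L)]
    _ = ∑ σ : L →ₐ[F₁] AlgebraicClosure L, σ x * ∑ i, σ (b i) * σ₀ (b.traceDual i) := by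
      simp only [map_mul, mul_assoc, Finset.sum_mul, Finset.mul_sum]
      exact Finset.sum_comm
    _ = σ₀ x := by simp [sum_algHom_basis_mul_algHom_traceDual_of_sup_eq_top h b]

end TraceExpansion

section Different

variable {A K B L : Type*} [CommRing A] [Field K] [CommRing B] [Field L] [Algebra A K]
  [Algebra B L] [Algebra A B] [Algebra K L] [Algebra A L] [IsScalarTower A K L]
  [IsScalarTower A B L] [IsFractionRing A K] [FiniteDimensional K L] [Algebra.IsSeparable K L]

variable (A K) in
theorem mem_differentIdeal_iff [IsDomain A] [IsIntegrallyClosed A] [IsDedekindDomain B]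
    [IsTorsionFree A B] [IsIntegralClosure B A L] {y : B} :
    y ∈ differentIdeal A B ↔
      ∀ x ∈ traceDual A K (1 : Submodule B L), algebraMap B L y * x ∈ (algebraMap B L).range := by
  have := IsIntegralClosure.isFractionRing_of_finite_extension A K L B
  have coe_mem : algebraMap B L y ∈ IsLocalization.coeSubmodule L (differentIdeal A B) ↔
      y ∈ differentIdeal A B := by
    simp [(FaithfulSMul.algebraMap_injective B L).eq_iff]
  rw [← coe_mem, coeSubmodule_differentIdeal A K, mem_div_iff_forall_mul_mem]
  exact forall₂_congr fun _ _ ↦ mem_one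

theorem traceDual_localizationLocalization_mem_traceDual_one {ι : Type*} [Finite ι]
    [DecidableEq ι] [IsLocalization (algebraMapSubmonoid B A⁰) L] (b : Basis ι A B) (i : ι) :
    (b.localizationLocalization K A⁰ L).traceDual i ∈ traceDual A K (1 : Submodule B L) := by
  have span_basis : span A (Set.range (b.localizationLocalization K A⁰ L)) =
      (1 : Submodule B L).restrictScalars A := by
    rw [b.localizationLocalization_span K A⁰ L]
    ext
    simp
  rw [← restrictScalars_mem A, traceDual_span_of_basis A _ _ span_basis.symm]
  exact subset_span (Set.mem_range_self i)

theorem differentIdeal_dvd_map_differentIdeal_of_sup_eq_top (A R₁ R₂ B : Type*) {K L : Type*}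
    [CommRing A] [CommRing R₁] [CommRing R₂] [CommRing B] [Field K] [Field L] [Algebra K L]
    {F₁ F₂ : IntermediateField K L}
    [Algebra A K] [Algebra A R₂] [Algebra A F₂] [Algebra R₁ F₁] [Algebra R₁ B] [Algebra R₁ L]
    [Algebra R₂ F₂] [Algebra R₂ B] [Algebra R₂ L] [Algebra B L]
    [IsScalarTower A K F₂] [IsScalarTower A R₂ F₂] [IsScalarTower R₁ F₁ L]
    [IsScalarTower R₁ B L] [IsScalarTower R₂ F₂ L] [IsScalarTower R₂ B L]
    [IsDomain A] [IsIntegrallyClosed A] [IsFractionRing A K]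
    [IsDomain R₁] [IsIntegrallyClosed R₁] [IsFractionRing R₁ F₁]
    [IsDedekindDomain R₂] [IsIntegralClosure R₂ A F₂]
    [IsDedekindDomain B] [IsIntegralClosure B R₁ L]
    [Module.Free A R₂] [Module.Finite A R₂] [IsTorsionFree R₁ B]
    [FiniteDimensional K F₂] [Algebra.IsSeparable K F₂]
    [FiniteDimensional F₁ L] [Algebra.IsSeparable F₁ L] (h : F₁ ⊔ F₂ = ⊤) :
    differentIdeal R₁ B ∣ (differentIdeal A R₂).map (algebraMap R₂ B) := by
  classical
  have := IsIntegralClosure.isLocalization A K F₂ R₂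
  rw [Ideal.dvd_iff_le, Ideal.map_le_iff_le_comap]
  intro y hy
  rw [Ideal.mem_comap, mem_differentIdeal_iff R₁ F₁ (L := L)]
  intro x hx
  let b := Free.chooseBasis A R₂
  let c := b.localizationLocalization K A⁰ F₂
  have trace_mem (i) : trace F₁ L (x * c i) ∈ (algebraMap R₁ F₁).range := by
    refine mem_traceDual.mp hx _ (mem_one.mpr ⟨algebraMap R₂ B (b i), ?_⟩)
    rw [b.localizationLocalization_apply K A⁰ F₂, ← IsScalarTower.algebraMap_apply,
      IsScalarTower.algebraMap_apply R₂ F₂ L]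
    rfl
  have mul_traceDual_mem (i) : algebraMap R₂ F₂ y * c.traceDual i ∈ (algebraMap R₂ F₂).range :=
    (mem_differentIdeal_iff A K).mp hy _
      (traceDual_localizationLocalization_mem_traceDual_one b i)
  rw [← sum_trace_mul_smul_traceDual_of_sup_eq_top h c x, Finset.mul_sum]
  refine sum_mem fun i _ ↦ ?_
  obtain ⟨r, hr⟩ := trace_mem i
  obtain ⟨s, hs⟩ := mul_traceDual_mem i
  refine ⟨algebraMap R₁ B r * algebraMap R₂ B s, ?_⟩
  calc algebraMap B L (algebraMap R₁ B r * algebraMap R₂ B s)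
    _ = algebraMap F₁ L (algebraMap R₁ F₁ r) * algebraMap F₂ L (algebraMap R₂ F₂ s) := by
      simp only [map_mul, ← IsScalarTower.algebraMap_apply]
    _ = algebraMap B L (algebraMap R₂ B y) *
        trace F₁ L (x * c i) • (c.traceDual i : L) := by
      rw [hr, hs, map_mul (algebraMap F₂ L), ← IsScalarTower.algebraMap_apply,
        ← IsScalarTower.algebraMap_apply, Algebra.smul_def, mul_left_comm]
      rfl

end Different

section RelativeDegree

variable {K E ι : Type*} [Field K] [Field E] [Algebra K E]

theorem finrank_restrict {F M : IntermediateField K E} (h : F ≤ M) :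
    finrank (restrict h) M = relfinrank F M := by
  rw [← relfinrank_top_right, ← relfinrank_map_map _ _ M.val]
  exact congrArg₂ relfinrank (lift_restrict h) (lift_top K M)

variable (L : ι → IntermediateField K E)

theorem finrank_finset_sup_le_prod (s : Finset ι) :
    finrank K ↥(s.sup L) ≤ ∏ i ∈ s, finrank K (L i) := by
  induction s using Finset.cons_induction with
  | empty => rw [Finset.sup_empty, IntermediateField.finrank_bot, Finset.prod_empty]
  | cons a s _ ih =>
    rw [Finset.sup_cons, Finset.prod_cons]
    exact (finrank_sup_le _ _).trans (Nat.mul_le_mul_left _ ih)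

theorem relfinrank_iSup_le_prod [Fintype ι] [∀ i, FiniteDimensional K (L i)] (i : ι) :
    relfinrank (L i) (⨆ j, L j) ≤ ∏ j, finrank K (L j) :=
  calc relfinrank (L i) (⨆ j, L j)
    _ ≤ finrank K ↥(⨆ j, L j) := Nat.le_of_dvd finrank_pos (relfinrank_dvd_finrank_bot _ _)
    _ ≤ ∏ j, finrank K (L j) :=
      Finset.sup_univ_eq_iSup L ▸ finrank_finset_sup_le_prod L Finset.univ

end RelativeDegree

section Compositum

theorem natAbs_discr_dvd_of_sup_eq_top {L : Type*} [Field L] [NumberField L]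
    {F₁ F₂ : IntermediateField ℚ L} (h : F₁ ⊔ F₂ = ⊤) :
    (discr L).natAbs ∣
      (discr F₁).natAbs ^ finrank F₁ L * (discr F₂).natAbs ^ finrank F₂ L := by
  have dvd := map_dvd Ideal.absNorm
    (differentIdeal_dvd_map_differentIdeal_of_sup_eq_top ℤ (𝓞 F₁) (𝓞 F₂) (𝓞 L) h)
  rw [Ideal.absNorm_algebraMap, absNorm_differentIdeal F₂,
    ← IsFractionRing.finrank_eq (𝓞 F₂) F₂ (𝓞 L) L] at dvd
  rw [natAbs_discr_eq_absNorm_differentIdeal_mul_natAbs_discr_pow F₁ (𝓞 F₁) L (𝓞 L), mul_comm]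
  exact mul_dvd_mul_left _ dvd

variable {Ω ι : Type*} [Field Ω] [CharZero Ω]

instance numberField_sup (F₁ F₂ : IntermediateField ℚ Ω) [NumberField F₁] [NumberField F₂] :
    NumberField ↥(F₁ ⊔ F₂) :=
  .of_module_finite ℚ _

instance numberField_iSup [Finite ι] (L : ι → IntermediateField ℚ Ω) [∀ i, NumberField (L i)] :
    NumberField ↥(⨆ i, L i) :=
  .of_module_finite ℚ _

instance numberField_finset_sup (L : ι → IntermediateField ℚ Ω) [∀ i, NumberField (L i)]
    (s : Finset ι) : NumberField ↥(s.sup L) := by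
  rw [Finset.sup_eq_iSup]
  exact .of_module_finite ℚ _

theorem natAbs_discr_sup_dvd (F₁ F₂ : IntermediateField ℚ Ω) [NumberField F₁] [NumberField F₂] :
    (discr ↥(F₁ ⊔ F₂)).natAbs ∣ (discr F₁).natAbs ^ relfinrank F₁ (F₁ ⊔ F₂) *
      (discr F₂).natAbs ^ relfinrank F₂ (F₁ ⊔ F₂) := by
  have le₁ : F₁ ≤ F₁ ⊔ F₂ := le_sup_left
  have le₂ : F₂ ≤ F₁ ⊔ F₂ := le_sup_right
  have restrict_sup : restrict le₁ ⊔ restrict le₂ = ⊤ := by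
    apply lift_injective
    rw [lift_sup, lift_restrict, lift_restrict, lift_top]
  rw [discr_eq_discr_of_algEquiv _ (restrictAlgEquiv le₁),
    discr_eq_discr_of_algEquiv _ (restrictAlgEquiv le₂), ← finrank_restrict le₁,
    ← finrank_restrict le₂]
  exact natAbs_discr_dvd_of_sup_eq_top restrict_sup

theorem natAbs_discr_finset_sup_dvd_prod (L : ι → IntermediateField ℚ Ω)
    [∀ i, NumberField (L i)] (s : Finset ι) :
    (discr ↥(s.sup L)).natAbs ∣
      ∏ i ∈ s, (discr (L i)).natAbs ^ relfinrank (L i) (s.sup L) := by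
  induction s using Finset.cons_induction with
  | empty =>
    rw [discr_eq_discr_of_algEquiv _ ((equivOfEq Finset.sup_empty).trans
      (IntermediateField.botEquiv ℚ Ω)), Rat.numberField_discr, Finset.prod_empty, Int.natAbs_one]
  | cons a s ha ih =>
    rw [discr_eq_discr_of_algEquiv _ (equivOfEq (Finset.sup_cons ha)), Finset.sup_cons,
      Finset.prod_cons]
    refine (natAbs_discr_sup_dvd (L a) (s.sup L)).trans (mul_dvd_mul_left _ ?_)
    calc (discr ↥(s.sup L)).natAbs ^ relfinrank (s.sup L) (L a ⊔ s.sup L)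
      _ ∣ (∏ i ∈ s, (discr (L i)).natAbs ^ relfinrank (L i) (s.sup L)) ^
          relfinrank (s.sup L) (L a ⊔ s.sup L) := pow_dvd_pow_of_dvd ih _
      _ = ∏ i ∈ s, (discr (L i)).natAbs ^ relfinrank (L i) (L a ⊔ s.sup L) := by
        rw [← Finset.prod_pow]
        refine Finset.prod_congr rfl fun i hi ↦ ?_
        rw [← pow_mul, relfinrank_mul_relfinrank (Finset.le_sup hi) le_sup_right]

variable [Fintype ι] (L : ι → IntermediateField ℚ Ω) [∀ i, NumberField (L i)]

theorem natAbs_discr_iSup_dvd_prod :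
    (discr ↥(⨆ i, L i)).natAbs ∣ ∏ i, (discr (L i)).natAbs ^ relfinrank (L i) (⨆ i, L i) := by
  rw [← discr_eq_discr_of_algEquiv _ (equivOfEq (Finset.sup_univ_eq_iSup L)),
    ← Finset.sup_univ_eq_iSup]
  exact natAbs_discr_finset_sup_dvd_prod L Finset.univ

theorem discr_compositum_le_general :
    (discr ↥(⨆ i, L i)).natAbs ≤
      (∏ i, (discr (L i)).natAbs) ^ ∏ i, finrank ℚ (L i) := by
  have discr_pos (i) : 0 < (discr (L i)).natAbs := Int.natAbs_pos.mpr (discr_ne_zero _)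
  calc (discr ↥(⨆ i, L i)).natAbs
    _ ≤ ∏ i, (discr (L i)).natAbs ^ relfinrank (L i) (⨆ i, L i) :=
      Nat.le_of_dvd (Finset.prod_pos fun i _ ↦ pow_pos (discr_pos i) _)
        (natAbs_discr_iSup_dvd_prod L)
    _ ≤ ∏ i, (discr (L i)).natAbs ^ ∏ j, finrank ℚ (L j) :=
      Finset.prod_le_prod' fun i _ ↦
        Nat.pow_le_pow_right (discr_pos i) (relfinrank_iSup_le_prod L i)
    _ = (∏ i, (discr (L i)).natAbs) ^ ∏ i, finrank ℚ (L i) := Finset.prod_pow _ _ _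

end Compositum

/-- For number fields `L 1, …, L f` inside a fixed algebraic closure of `ℚ`, the absolute
discriminant of their compositum is at most
`(d_{L 1} ⋯ d_{L f}) ^ ([L 1 : ℚ] ⋯ [L f : ℚ])`. -/
theorem discr_compositum_le (f : ℕ) (L : Fin f → IntermediateField ℚ (AlgebraicClosure ℚ))
    [∀ i, NumberField ↥(L i)] [NumberField ↥(⨆ i, L i)] :
    (NumberField.discr ↥(⨆ i, L i)).natAbs ≤
      (∏ i, (NumberField.discr ↥(L i)).natAbs) ^ (∏ i, Module.finrank ℚ ↥(L i)) :=
  discr_compositum_le_general L
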